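/- arXiv:1510.06302 — 2 statements merged into one kernel-verified Lean document; each statement's English description precedes it below -/
import Mathlib

section
/- Let K be a field in which every element is a square (for instance K algebraically closed), let G = SL₂(K), and let V be a G-module such that [u', v'] ∈ C_V(U) for all u' ∈ U and v' ∈ V (equivalently [u'', [u', v]] = 0 for all u', u'' ∈ U, v ∈ V) and such that C_V(T) = 0. Then for every a ∈ C_V(U) and every λ ∈ Kˣ one has u_λ·(w·a) = w·a + i·(t_λ·a); in particular [u, w·a] = i·a for all a ∈ C_V(U). -/
/-- The unipotent element `u_λ = [[1, λ], [0, 1]]` of `SL₂(K)`. -/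
def uu (K : Type*) [Field K] (l : K) : Matrix.SpecialLinearGroup (Fin 2) K :=
  ⟨!![1, l; 0, 1], by simp [Matrix.det_fin_two_of]⟩

/-- The torus element `t_λ = [[λ, 0], [0, λ⁻¹]]` of `SL₂(K)`, for `λ ∈ Kˣ`. -/
def tt (K : Type*) [Field K] (l : Kˣ) : Matrix.SpecialLinearGroup (Fin 2) K :=
  ⟨!![(l : K), 0; 0, ((l⁻¹ : Kˣ) : K)], by simp [Matrix.det_fin_two_of]⟩

/-- The Weyl element `w = [[0, 1], [-1, 0]]` of `SL₂(K)`. -/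
def ww (K : Type*) [Field K] : Matrix.SpecialLinearGroup (Fin 2) K :=
  ⟨!![0, 1; -1, 0], by simp [Matrix.det_fin_two_of]⟩

/-- The central involution `i = -I` of `SL₂(K)`. -/
def ii (K : Type*) [Field K] : Matrix.SpecialLinearGroup (Fin 2) K :=
  ⟨!![-1, 0; 0, -1], by simp [Matrix.det_fin_two_of]⟩


section helpers
variable {K : Type*} [Field K]

lemma rel_braid (l : Kˣ) :
    uu K (l : K) * ww K * uu K ((l⁻¹ : Kˣ) : K) * ww K * uu K (l : K) = ii K * tt K l * ww K := by
  apply Matrix.SpecialLinearGroup.ext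
  intro i j
  simp only [Matrix.SpecialLinearGroup.coe_mul]
  fin_cases i <;> fin_cases j <;> simp [uu, ww, ii, tt, Matrix.SpecialLinearGroup.coe_mul, Matrix.mul_apply, Fin.sum_univ_two]

lemma rel_ww : ww K * ww K = ii K := by
  apply Matrix.SpecialLinearGroup.ext
  intro i j
  simp only [Matrix.SpecialLinearGroup.coe_mul]
  fin_cases i <;> fin_cases j <;> simp [ww, ii, Matrix.SpecialLinearGroup.coe_mul, Matrix.mul_apply, Fin.sum_univ_two]

lemma rel_tw (l : Kˣ) : tt K l⁻¹ * ww K = ww K * tt K l := by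
  apply Matrix.SpecialLinearGroup.ext
  intro i j
  simp only [Matrix.SpecialLinearGroup.coe_mul]
  fin_cases i <;> fin_cases j <;> simp [ww, tt, Matrix.SpecialLinearGroup.coe_mul, Matrix.mul_apply, Fin.sum_univ_two]

lemma rel_ut (m : K) (l : Kˣ) :
    uu K m * tt K l = tt K l * uu K (m * ((l⁻¹ : Kˣ) : K) * ((l⁻¹ : Kˣ) : K)) := by
  apply Matrix.SpecialLinearGroup.ext
  intro i j
  simp only [Matrix.SpecialLinearGroup.coe_mul]
  fin_cases i <;> fin_cases j <;> simp [uu, tt, Matrix.SpecialLinearGroup.coe_mul, Matrix.mul_apply, Fin.sum_univ_two]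
  field_simp

lemma rel_ig (g : Matrix.SpecialLinearGroup (Fin 2) K) : g * ii K = ii K * g := by
  apply Matrix.SpecialLinearGroup.ext
  intro i j
  simp only [Matrix.SpecialLinearGroup.coe_mul]
  fin_cases i <;> fin_cases j <;> simp [ii, Matrix.SpecialLinearGroup.coe_mul, Matrix.mul_apply, Fin.sum_univ_two]

lemma rel_t1 : tt K 1 = 1 := by
  apply Matrix.SpecialLinearGroup.ext
  intro i j
  fin_cases i <;> fin_cases j <;> simp [tt]

variable {V : Type*} [AddCommGroup V] [DistribMulAction (Matrix.SpecialLinearGroup (Fin 2) K) V]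

lemma smul_ig (g : Matrix.SpecialLinearGroup (Fin 2) K) (v : V) :
    g • ii K • v = ii K • g • v := by
  rw [← mul_smul, rel_ig, mul_smul]

lemma braid_smul (l : Kˣ) (v : V) :
    uu K (l : K) • ww K • uu K ((l⁻¹ : Kˣ) : K) • ww K • uu K (l : K) • v
      = ii K • tt K l • ww K • v := by
  simpa only [mul_smul] using congrArg (fun g => g • v) (rel_braid l)

lemma ww_smul (v : V) : ww K • ww K • v = ii K • v := by
  rw [← mul_smul, rel_ww]

lemma fixed_zero (hT : ∀ v : V, (∀ l : Kˣ, tt K l • v = v) → v = 0) (b : V)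
    (h1 : ∀ l : K, uu K l • b = b) (h2 : ∀ l : K, uu K l • ww K • b = ww K • b) : b = 0 := by
  have h : ∀ l : Kˣ, b = tt K l • ww K • b := by
    intro l
    have := braid_smul l b
    rw [h1, h2, ww_smul, smul_ig, h1] at this
    exact smul_left_cancel _ this
  have hw : ww K • b = b := by
    have := h 1
    rw [rel_t1, one_smul] at this
    exact this.symm
  apply hT
  intro l
  have := h l
  rw [hw] at this
  exact this.symm

end helpers

/-- Let `K` be a field in which every element is a square,
`G = SL₂(K)`, and `V` a `G`-module such that `[u', v'] ∈ C_V(U)` for all `u' ∈ U`,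
`v' ∈ V`, and `C_V(T) = 0`.  Then for every `a ∈ C_V(U)` and `λ ∈ Kˣ`:
`u_λ • (w • a) = w • a + i • (t_λ • a)`; in particular `[u, w • a] = i • a`. -/
theorem stmt10 {K : Type*} [Field K] {V : Type*} [AddCommGroup V]
    [DistribMulAction (Matrix.SpecialLinearGroup (Fin 2) K) V]
    (hsq : ∀ x : K, ∃ y : K, y * y = x)
    (hquad : ∀ (l : K) (v : V) (m : K),
      uu K m • (uu K l • v - v) = uu K l • v - v)
    (hT : ∀ v : V, (∀ l : Kˣ, tt K l • v = v) → v = 0) :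
    ∀ a : V, (∀ l : K, uu K l • a = a) →
      (∀ l : Kˣ, uu K (l : K) • (ww K • a) = ww K • a + ii K • (tt K l • a)) ∧
      uu K 1 • (ww K • a) - ww K • a = ii K • a := by
  intro a ha
  have key : ∀ l : Kˣ, uu K (l : K) • (ww K • a) = ww K • a + ii K • (tt K l • a) := by
    intro l
    rw [← sub_eq_iff_eq_add', ← sub_eq_zero]
    have hf := hquad (l : K) (ww K • a)
    set f := uu K (l : K) • (ww K • a) - ww K • a with hfdef
    have hf' : uu K (l : K) • (ww K • a) = ww K • a + f := by rw [hfdef]; abel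
    have hta : ∀ m : K, uu K m • ii K • tt K l • a = ii K • tt K l • a := by
      intro m
      rw [smul_ig, ← mul_smul (uu K m), rel_ut, mul_smul, ha]
    apply fixed_zero hT
    · intro m
      rw [smul_sub, hf, hta]
    · have hb := braid_smul l⁻¹ a
      rw [inv_inv, ha, hf', smul_add, ww_smul, smul_add, smul_ig, ha, ← mul_smul (tt K l⁻¹),
        rel_tw, mul_smul] at hb
      have hc : ww K • (f - ii K • tt K l • a)
          = -(ii K • a + (uu K ((l⁻¹ : Kˣ) : K) • ww K • f - ww K • f)) := by
        rw [smul_sub, smul_ig, ← hb]; abel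
      intro m
      rw [hc, smul_neg, smul_add, smul_ig, ha, hquad]
  refine ⟨key, ?_⟩
  have := key 1
  rw [rel_t1, one_smul, Units.val_one] at this
  rw [this]; abel
end

section
/- Let K be an algebraically closed field (of arbitrary characteristic), let G = SL₂(K), and let V be a nonzero G-module such that: V is G-irreducible (its only G-invariant subgroups are 0 and V); U does not act trivially on V; [u', v'] ∈ C_V(U) for all u' ∈ U and v' ∈ V; and C_V(T) = 0. Then there exists a K-vector space structure on V, whose underlying additive group is the given one, for which the action of every element of G on V is K-linear, together with a K-linear, G-equivariant isomorphism from V onto K² equipped with the natural action of SL₂(K) by matrix multiplication. -/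
open Matrix in
/-- The Weyl element. -/
def wwAux (K : Type*) [Field K] : SpecialLinearGroup (Fin 2) K :=
  ⟨!![0, 1; -1, 0], by simp [Matrix.det_fin_two_of]⟩

section aux
variable {K : Type*} [Field K]

lemma uuAux_coe (l : K) : (uu K l : Matrix (Fin 2) (Fin 2) K) = !![1, l; 0, 1] := rfl

lemma ttAux_coe (l : Kˣ) : (tt K l : Matrix (Fin 2) (Fin 2) K) =
    !![(l : K), 0; 0, ((l⁻¹ : Kˣ) : K)] := rfl

lemma wwAux_coe : (wwAux K : Matrix (Fin 2) (Fin 2) K) = !![0, 1; -1, 0] := rfl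

lemma uuAux_mul (l m : K) : uu K l * uu K m = uu K (l + m) := by
  ext i j
  fin_cases i <;> fin_cases j <;> simp [uuAux_coe, Matrix.mul_apply, Fin.sum_univ_two, add_comm]

lemma ttAux_mul (l m : Kˣ) : tt K l * tt K m = tt K (l * m) := by
  ext i j
  fin_cases i <;> fin_cases j <;> simp [ttAux_coe, Matrix.mul_apply, Fin.sum_univ_two, mul_comm]

lemma uuAux_tt (l : Kˣ) (m : K) :
    uu K m * tt K l = tt K l * uu K (m * (l : K)⁻¹ * (l : K)⁻¹) := by
  ext i j
  fin_cases i <;> fin_cases j <;> simp [uuAux_coe, ttAux_coe, Matrix.mul_apply, Fin.sum_univ_two]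
  field_simp

lemma wwAux_inv : (wwAux K)⁻¹ = tt K (-1) * wwAux K := by
  ext i j
  fin_cases i <;> fin_cases j <;>
    simp [wwAux_coe, ttAux_coe, Matrix.mul_apply, Fin.sum_univ_two, Matrix.adjugate_fin_two_of]

lemma wwAux_rel (l : Kˣ) :
    uu K l * (wwAux K * uu K (l : K)⁻¹ * (wwAux K)⁻¹) * uu K l = tt K l * wwAux K := by
  ext i j
  fin_cases i <;> fin_cases j <;>
    simp [wwAux_coe, uuAux_coe, ttAux_coe, Matrix.mul_apply, Fin.sum_univ_two, Matrix.adjugate_fin_two_of]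

lemma wwAux_conj (l : Kˣ) : (wwAux K)⁻¹ * (tt K l * wwAux K) = tt K l⁻¹ := by
  ext i j
  fin_cases i <;> fin_cases j <;>
    simp [wwAux_coe, ttAux_coe, Matrix.mul_apply, Fin.sum_univ_two, Matrix.adjugate_fin_two_of]

lemma genAux_low (S : Subgroup (Matrix.SpecialLinearGroup (Fin 2) K)) (hu : ∀ l, uu K l ∈ S)
    (hw : wwAux K ∈ S) (g : Matrix.SpecialLinearGroup (Fin 2) K) (hc : g 1 0 ≠ 0) : g ∈ S := by
  have hd := g.det_coe
  rw [Matrix.det_fin_two] at hd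
  have : g = uu K ((g 0 0 - 1) / g 1 0) * (wwAux K * uu K (- g 1 0) * (wwAux K)⁻¹) *
      uu K ((g 1 1 - 1) / g 1 0) := by
    ext i j
    fin_cases i <;> fin_cases j <;>
      simp [wwAux_coe, uuAux_coe, Matrix.mul_apply, Fin.sum_univ_two, Matrix.adjugate_fin_two_of] <;>
      field_simp <;> first | linear_combination hd | linear_combination -hd | ring
  rw [this]
  exact S.mul_mem (S.mul_mem (hu _) (S.mul_mem (S.mul_mem hw (hu _)) (S.inv_mem hw))) (hu _)

lemma genAux (S : Subgroup (Matrix.SpecialLinearGroup (Fin 2) K)) (hu : ∀ l, uu K l ∈ S)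
    (hw : wwAux K ∈ S) (g : Matrix.SpecialLinearGroup (Fin 2) K) : g ∈ S := by
  by_cases hc : g 1 0 = 0
  · have hd := g.det_coe
    rw [Matrix.det_fin_two, hc] at hd
    have h0 : g 0 0 ≠ 0 := by
      intro h
      simp [h] at hd
    have : wwAux K * g ∈ S := by
      apply genAux_low S hu hw
      simpa [wwAux_coe, Matrix.mul_apply, Fin.sum_univ_two] using h0
    simpa using S.mul_mem (S.inv_mem hw) this
  · exact genAux_low S hu hw g hc

end aux

/-- Let `K` be an algebraically closed field, `G = SL₂(K)` and `V`
a nonzero `G`-irreducible `G`-module on which `U` acts nontrivially, with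
`[U, V] ⊆ C_V(U)` and `C_V(T) = 0`.  Then `V` carries a `K`-vector space structure
(on the given additive group) making the `G`-action `K`-linear, together with a
`K`-linear `G`-equivariant isomorphism onto the natural module `K²`.

This is expressed by the existence of a scalar multiplication `smul : K → V → V`
and an additive isomorphism `e : V ≃+ (Fin 2 → K)` such that `e` intertwines `smul`
with the scalar multiplication of `K²` (so `smul` is a `K`-vector space structure on
`V` and `e` is `K`-linear), the `G`-action commutes with `smul` (it is `K`-linear),
and `e` intertwines the `G`-action with matrix multiplication on `K²`. -/
theorem stmt11 {K : Type*} [Field K] [IsAlgClosed K] {V : Type*} [AddCommGroup V]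
    [DistribMulAction (Matrix.SpecialLinearGroup (Fin 2) K) V]
    (hV : ∃ v : V, v ≠ 0)
    (hirr : ∀ W : AddSubgroup V,
      (∀ (g : Matrix.SpecialLinearGroup (Fin 2) K), ∀ v ∈ W, g • v ∈ W) →
      W = ⊥ ∨ W = ⊤)
    (hU : ∃ (l : K) (v : V), uu K l • v ≠ v)
    (hquad : ∀ (l : K) (v : V) (m : K),
      uu K m • (uu K l • v - v) = uu K l • v - v)
    (hT : ∀ v : V, (∀ l : Kˣ, tt K l • v = v) → v = 0) :
    ∃ (smul : K → V → V) (e : V ≃+ (Fin 2 → K)),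
      (∀ (c : K) (v : V), e (smul c v) = c • e v) ∧
      (∀ (g : Matrix.SpecialLinearGroup (Fin 2) K) (c : K) (v : V),
        g • smul c v = smul c (g • v)) ∧
      (∀ (g : Matrix.SpecialLinearGroup (Fin 2) K) (v : V),
        e (g • v) = (g : Matrix (Fin 2) (Fin 2) K).mulVec (e v)) := by
  classical
  set w := wwAux K with hw
  -- fixed points of `G` vanish
  have hfix : ∀ v : V, (∀ m, uu K m • v = v) → (∀ m, uu K m • w⁻¹ • v = w⁻¹ • v) → v = 0 := by
    intro v h1 h2
    let W : AddSubgroup V :=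
      { carrier := {v | ∀ g : Matrix.SpecialLinearGroup (Fin 2) K, g • v = v}
        zero_mem' := fun g => smul_zero g
        add_mem' := fun {a b} ha hb g => by rw [smul_add, ha g, hb g]
        neg_mem' := fun {a} ha g => by rw [smul_neg, ha g] }
    have hvW : v ∈ W := by
      intro g
      refine genAux (MulAction.stabilizer _ v) h1 ?_ g
      have h3 : ∀ m, (w * uu K m * w⁻¹) • v = v := by
        intro m
        rw [mul_smul, mul_smul, h2 m, smul_inv_smul]
      have h4 := wwAux_rel (1 : Kˣ)
      have h5 : tt K 1 = 1 := by
        ext i j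
        fin_cases i <;> fin_cases j <;> simp [tt]
      rw [h5, one_mul] at h4
      rw [MulAction.mem_stabilizer_iff, ← h4, mul_smul, mul_smul, h1, h3, h1]
    rcases hirr W (fun g v hv => by rw [hv g]; exact hv) with h | h
    · rw [h] at hvW
      exact hvW
    · obtain ⟨l, x, hx⟩ := hU
      have : x ∈ W := by rw [h]; trivial
      exact absurd (this _) hx
  have hTA : ∀ (l : Kˣ) (v : V), (∀ m, uu K m • v = v) → ∀ m, uu K m • tt K l • v = tt K l • v := by
    intro l v hv m
    rw [← mul_smul, uuAux_tt, mul_smul, hv]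
  have key0 : ∀ (l : Kˣ) (v : V), (∀ m, uu K m • v = v) →
      tt K l⁻¹ • v = uu K (l : K)⁻¹ • w⁻¹ • v - w⁻¹ • v := by
    intro l v hv
    set a := uu K (l : K)⁻¹ • w⁻¹ • v - w⁻¹ • v with ha
    have haA : ∀ m, uu K m • a = a := fun m => hquad _ _ m
    have h1 : (tt K l * w) • v = v + uu K l • w • a := by
      have : uu K (l : K)⁻¹ • w⁻¹ • v = w⁻¹ • v + a := by rw [ha]; abel
      rw [hw, ← wwAux_rel l, ← hw, mul_smul, mul_smul, hv, mul_smul, mul_smul, this, smul_add,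
        smul_add, smul_inv_smul, hv]
    have h2 : (tt K l * w) • v - w • a = v + (uu K l • w • a - w • a) := by
      rw [h1]; abel
    have h3 : w⁻¹ • ((tt K l * w) • v - w • a) = tt K l⁻¹ • v - a := by
      rw [smul_sub, inv_smul_smul, ← mul_smul, hw, wwAux_conj]
    have h4 : (tt K l * w) • v - w • a = 0 := by
      apply hfix
      · intro m
        rw [h2, smul_add, hv, hquad]
      · intro m
        rw [h3, smul_sub, haA, hTA _ _ hv]
    rw [h4, smul_zero] at h3
    exact (sub_eq_zero.mp h3.symm)
  let τ : K → V → V := fun l v => uu K l • w⁻¹ • v - w⁻¹ • v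
  have key : ∀ (l : Kˣ) (v : V), (∀ m, uu K m • v = v) → τ l v = tt K l • v := by
    intro l v hv
    have := key0 l⁻¹ v hv
    simpa using this.symm
  have hτA : ∀ l v m, uu K m • τ l v = τ l v := fun l v m => hquad _ _ m
  have hu0 : uu K 0 = 1 := by
    ext i j
    fin_cases i <;> fin_cases j <;> simp [uu]
  have hτ0 : ∀ v, τ 0 v = 0 := by
    intro v
    simp [τ, hu0]
  have hτz : ∀ l, τ l 0 = 0 := by
    intro l
    simp [τ]
  have hτadd : ∀ l m v, τ (l + m) v = τ l v + τ m v := by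
    intro l m v
    have h := hquad m (w⁻¹ • v) l
    rw [smul_sub] at h
    simp only [τ]
    rw [← uuAux_mul, mul_smul]
    rw [sub_eq_iff_eq_add] at h
    rw [h]
    abel
  have hτmul : ∀ l m v, (∀ k, uu K k • v = v) → τ l (τ m v) = τ (l * m) v := by
    intro l m v hv
    by_cases hl : l = 0
    · simp [hl, hτ0]
    by_cases hm : m = 0
    · simp [hm, hτ0, hτz]
    have h1 := key (Units.mk0 l hl) (τ m v) (hτA _ _)
    have h2 := key (Units.mk0 m hm) v hv
    have h3 := key (Units.mk0 l hl * Units.mk0 m hm) v hv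
    simp only [Units.val_mul, Units.val_mk0] at h1 h2 h3
    rw [h1, h2, h3, ← mul_smul, ttAux_mul]
  have hone : ∀ v : V, (∀ k, uu K k • v = v) → τ 1 v = v := by
    intro v hv
    have h5 : tt K 1 = 1 := by
      ext i j
      fin_cases i <;> fin_cases j <;> simp [tt]
    have := key 1 v hv
    rw [h5, one_smul] at this
    simpa using this
  have hneg : ∀ v : V, (∀ k, uu K k • v = v) → tt K (-1) • v = -v := by
    intro v hv
    have h1 := key (-1) v hv
    have h2 := hτadd 1 (-1) v
    rw [add_neg_cancel, hτ0, hone v hv] at h2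
    rw [← h1]
    simp only [Units.val_neg, Units.val_one]
    exact (neg_eq_of_add_eq_zero_right h2.symm).symm
  have hwinv : ∀ v : V, (∀ k, uu K k • v = v) → w • v = - (w⁻¹ • v) := by
    intro v hv
    have h1 : w⁻¹ • tt K (-1) • w • w • v = w⁻¹ • v := by
      rw [← mul_smul (tt K (-1)), hw, ← wwAux_inv, inv_smul_smul]
    have h2 : w⁻¹ * (tt K (-1) * w) = tt K (-1) := by
      rw [hw, wwAux_conj]; simp
    have h3 : w⁻¹ • v = tt K (-1) • w • v := by
      rw [← mul_smul, hw, wwAux_inv]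
    have h4 : tt K (-1) • w • v = w • tt K (-1) • v := by
      conv_rhs => rw [← h2]
      rw [← mul_smul, ← mul_smul]
      congr 1
      group
    rw [h3, h4, hneg v hv, smul_neg, neg_neg]
  -- a nonzero element of `C_V(U)`
  obtain ⟨l0, v0, hv0⟩ := hU
  obtain ⟨a, haA, ha0⟩ : ∃ a : V, (∀ m, uu K m • a = a) ∧ a ≠ 0 :=
    ⟨_, hquad l0 v0, sub_ne_zero.mpr hv0⟩
  let φ : (Fin 2 → K) →+ V :=
    { toFun := fun p => τ (p 0) a + w⁻¹ • τ (p 1) a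
      map_zero' := by simp [hτ0]
      map_add' := by
        intro p q
        simp only [Pi.add_apply, hτadd, smul_add]
        abel }
  have hφ : ∀ p, φ p = τ (p 0) a + w⁻¹ • τ (p 1) a := fun _ => rfl
  let S : Subgroup (Matrix.SpecialLinearGroup (Fin 2) K) :=
    { carrier := {g | ∀ p, φ ((g : Matrix (Fin 2) (Fin 2) K).mulVec p) = g • φ p}
      one_mem' := by intro p; simp
      mul_mem' := by
        intro g h hg hh p
        rw [Matrix.SpecialLinearGroup.coe_mul, ← Matrix.mulVec_mulVec, hg, hh, mul_smul]
      inv_mem' := by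
        intro g hg p
        have := hg (((g⁻¹ : Matrix.SpecialLinearGroup (Fin 2) K) :
          Matrix (Fin 2) (Fin 2) K).mulVec p)
        rw [Matrix.mulVec_mulVec, ← Matrix.SpecialLinearGroup.coe_mul, mul_inv_cancel] at this
        rw [eq_inv_smul_iff, ← this]
        simp }
  have hequi : ∀ (g : Matrix.SpecialLinearGroup (Fin 2) K) p,
      φ ((g : Matrix (Fin 2) (Fin 2) K).mulVec p) = g • φ p := by
    intro g
    refine genAux S ?_ ?_ g
    · intro l p
      have e0 : ((uu K l : Matrix (Fin 2) (Fin 2) K).mulVec p) 0 = p 0 + l * p 1 := by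
        simp [uu, Matrix.mulVec, dotProduct, Fin.sum_univ_two]
      have e1 : ((uu K l : Matrix (Fin 2) (Fin 2) K).mulVec p) 1 = p 1 := by
        simp [uu, Matrix.mulVec, dotProduct, Fin.sum_univ_two]
      rw [hφ, hφ, e0, e1, hτadd, smul_add, hτA, ← hτmul _ _ _ haA]
      have : uu K l • w⁻¹ • τ (p 1) a = τ l (τ (p 1) a) + w⁻¹ • τ (p 1) a :=
        (sub_add_cancel _ _).symm
      rw [this]
      abel
    · intro p
      have e0 : ((wwAux K : Matrix (Fin 2) (Fin 2) K).mulVec p) 0 = p 1 := by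
        simp [wwAux, Matrix.mulVec, dotProduct, Fin.sum_univ_two]
      have e1 : ((wwAux K : Matrix (Fin 2) (Fin 2) K).mulVec p) 1 = - p 0 := by
        simp [wwAux, Matrix.mulVec, dotProduct, Fin.sum_univ_two]
      have e2 : τ (- p 0) a = - τ (p 0) a := by
        have h2 := hτadd (p 0) (- p 0) a
        rw [add_neg_cancel, hτ0] at h2
        exact (neg_eq_of_add_eq_zero_right h2.symm).symm
      rw [hφ, hφ, e0, e1, e2, ← hw, smul_add, smul_inv_smul, hwinv _ (hτA _ _), smul_neg]
      abel
  have hτinj : ∀ x, τ x a = 0 → x = 0 := by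
    intro x hx
    by_contra hne
    have := key (Units.mk0 x hne) a haA
    rw [Units.val_mk0, hx] at this
    exact ha0 ((smul_eq_zero_iff_eq _).mp this.symm)
  have hinj : Function.Injective φ := by
    rw [injective_iff_map_eq_zero]
    intro p hp
    rw [hφ] at hp
    have h1 : w⁻¹ • τ (p 1) a = - τ (p 0) a := (neg_eq_of_add_eq_zero_right hp).symm
    have h3 : τ (p 1) a = 0 := by
      have h4 : w⁻¹ • τ (p 1) a = 0 := by
        have h5 := hwinv _ (hτA (p 1) a)
        have h6 := hfix (τ (p 1) a) (hτA _ _) (by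
          intro m
          rw [h1, smul_neg, hτA])
        rw [h6, smul_zero]
      exact (smul_eq_zero_iff_eq _).mp h4
    rw [h3, smul_zero, add_zero] at hp
    ext i
    fin_cases i
    · exact hτinj _ hp
    · exact hτinj _ h3
  have hsurj : Function.Surjective φ := by
    rw [← AddMonoidHom.range_eq_top]
    rcases hirr φ.range (by
      rintro g _ ⟨p, rfl⟩
      exact ⟨_, hequi g p⟩) with h | h
    · exfalso
      apply ha0
      have : a ∈ φ.range := ⟨![1, 0], by simp [hφ, hone a haA, hτ0]⟩
      rw [h] at this
      exact this
    · exact h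
  let e : (Fin 2 → K) ≃+ V := AddEquiv.ofBijective φ ⟨hinj, hsurj⟩
  have he : ∀ (g : Matrix.SpecialLinearGroup (Fin 2) K) p,
      e ((g : Matrix (Fin 2) (Fin 2) K).mulVec p) = g • e p := hequi
  have he' : ∀ (g : Matrix.SpecialLinearGroup (Fin 2) K) (v : V),
      e.symm (g • v) = (g : Matrix (Fin 2) (Fin 2) K).mulVec (e.symm v) := by
    intro g v
    rw [AddEquiv.symm_apply_eq, he, AddEquiv.apply_symm_apply]
  refine ⟨fun c v => e (c • e.symm v), e.symm, ?_, ?_, he'⟩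
  · intro c v
    simp
  · intro g c v
    simp only
    rw [he', ← he, Matrix.mulVec_smul]
end
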